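/- Let X and Y be Polish spaces, let d_X be a compatible complete metric on X, and let f : X → Y be an arbitrary function. Then Player II has a winning strategy in the game G_f if and only if f is of Baire class 1; moreover the game G_f is determined, i.e., exactly one of the two players has a winning strategy. -/

import Mathlib

/-!
Three facts give the theorem: the two players cannot both have winning strategies
(`not_both_win`), Player II wins when `f` is of Baire class 1 (`playerII_wins`), and Player I wins
when it is not (`playerI_wins`).

If `f` is of Baire class 1, then for every `k` the space `X` is a union of countably many closed
sets `C k i`, each mapped by `f` into a ball of radius `2⁻ᵏ`. The position `x_n` confines the limit
`x` to the closed ball of radius `2 * 2⁻ⁿ` about `x_n`, and the least `i` for which `C k i` meets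
this ball is eventually the least `i` with `x ∈ C k i`. So for each `k` Player II eventually knows a
ball of radius `2⁻ᵏ` containing `f x`; he plays a point common to the balls guessed for
`0, …, k`, with `k` as large as possible.

If `f` is not of Baire class 1, some `U = {φ > 0}` with `φ` continuous has a preimage that is not
Fσ, so for some `ε > 0` no Fσ set containing `A = {ε ≤ φ ∘ f}` is disjoint from
`B = {φ ∘ f ≤ 0}`. A Cantor–Bendixson type argument, with Lindelöf's theorem in place of a
transfinite derivative, gives a nonempty set `P` in which `A ∩ P` and `B ∩ P` are both dense
(`exists_kernel`). Player I stays in `P ∩ (A ∪ B)`: he rests at a point of `A` until Player II plays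
`y` with `φ y > 2ε/3`, jumps then to a nearby point of `B`, rests there until `φ y < ε/3`, and so
on. If he jumps infinitely often, `φ (y_n)` oscillates; otherwise he comes to rest at a point `x`
from whose value `φ (f x)` the numbers `φ (y_n)` stay away.
-/

open Filter Topology

/-- A set is Fσ if it is a countable union of closed sets. -/
def IsFsigma {X : Type*} [TopologicalSpace X] (s : Set X) : Prop :=
  ∃ C : ℕ → Set X, (∀ n, IsClosed (C n)) ∧ s = ⋃ n, C n

/-- A function is of Baire class 1 if preimages of open sets are Fσ. -/
def BaireClassOne {X Y : Type*} [TopologicalSpace X] [TopologicalSpace Y]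
    (f : X → Y) : Prop :=
  ∀ U : Set Y, IsOpen U → IsFsigma (f ⁻¹' U)

/-- Player II has a winning strategy in the game `G_f`: a function `τ` assigning to each
finite sequence `(x_0, …, x_n)` of moves of Player I a point `y_n ∈ Y`, such that for every
run `(x_n)` of Player I obeying the rule `dist (x_n) (x_{n+1}) ≤ 2⁻ⁿ`, the sequence `(x_n)`
converges to some `x` and the responses `(y_n)` converge to `f x`. -/
def PlayerIIHasWinningStrategy {X Y : Type*} [MetricSpace X] [MetricSpace Y]
    (f : X → Y) : Prop :=
  ∃ τ : (n : ℕ) → (Fin (n + 1) → X) → Y,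
    ∀ xs : ℕ → X, (∀ n, dist (xs n) (xs (n + 1)) ≤ (1 / 2 : ℝ) ^ n) →
      ∃ x : X, Tendsto xs atTop (𝓝 x) ∧
        Tendsto (fun n => τ n (fun i : Fin (n + 1) => xs i)) atTop (𝓝 (f x))

/-- Player I has a winning strategy in the game `G_f`: a function `σ` assigning to each
finite sequence `(y_0, …, y_{n-1})` of moves of Player II a point `x_n ∈ X`, such that in
every run where Player I follows `σ`, the rule `dist (x_n) (x_{n+1}) ≤ 2⁻ⁿ` holds, the
moves `(x_n)` converge to some `x`, and the moves `(y_n)` of Player II fail to converge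
to `f x`. -/
def PlayerIHasWinningStrategy {X Y : Type*} [MetricSpace X] [MetricSpace Y]
    (f : X → Y) : Prop :=
  ∃ σ : (n : ℕ) → (Fin n → Y) → X,
    ∀ ys : ℕ → Y,
      (∀ n, dist (σ n (fun i : Fin n => ys i)) (σ (n + 1) (fun i : Fin (n + 1) => ys i))
        ≤ (1 / 2 : ℝ) ^ n) ∧
      ∃ x : X, Tendsto (fun n => σ n (fun i : Fin n => ys i)) atTop (𝓝 x) ∧
        ¬ Tendsto ys atTop (𝓝 (f x))

/-! ### The two players cannot both win -/

/-- Player II's moves in the run in which Player I follows `σ` and Player II follows `τ`. -/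
def play {X Y : Type*} (σ : (n : ℕ) → (Fin n → Y) → X)
    (τ : (n : ℕ) → (Fin (n + 1) → X) → Y) (n : ℕ) : Y :=
  τ n (fun i : Fin (n + 1) => σ i (fun j : Fin i => play σ τ j))
termination_by n
decreasing_by have := i.2; have := j.2; omega

lemma not_both_win {X Y : Type*} [MetricSpace X] [MetricSpace Y] (f : X → Y)
    (hII : PlayerIIHasWinningStrategy f) (hI : PlayerIHasWinningStrategy f) : False := by
  obtain ⟨τ, hτ⟩ := hII
  obtain ⟨σ, hσ⟩ := hI
  obtain ⟨hrule, x, hx, hnot⟩ := hσ (play σ τ)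
  obtain ⟨x', hx', hy⟩ := hτ (fun n => σ n (fun i : Fin n => play σ τ i)) hrule
  obtain rfl := tendsto_nhds_unique hx hx'
  refine hnot (hy.congr fun n => ?_)
  rw [play]

/-! ### Fσ sets -/

lemma isFsigma_iff_isGδ_compl {X : Type*} [TopologicalSpace X] {s : Set X} :
    IsFsigma s ↔ IsGδ sᶜ := by
  rw [isGδ_iff_eq_iInter_nat]
  constructor
  · rintro ⟨C, hC, rfl⟩
    exact ⟨fun n => (C n)ᶜ, fun n => (hC n).isOpen_compl, by simp⟩
  · rintro ⟨O, hO, h⟩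
    refine ⟨fun n => (O n)ᶜ, fun n => (hO n).isClosed_compl, ?_⟩
    rw [← Set.compl_iInter, ← h, compl_compl]

lemma IsClosed.isFsigma {X : Type*} [TopologicalSpace X] {s : Set X} (h : IsClosed s) :
    IsFsigma s :=
  isFsigma_iff_isGδ_compl.2 h.isOpen_compl.isGδ

lemma isFsigma_biUnion {X ι : Type*} [TopologicalSpace X] {t : Set ι} (ht : t.Countable)
    {s : ι → Set X} (h : ∀ i ∈ t, IsFsigma (s i)) : IsFsigma (⋃ i ∈ t, s i) := by
  rw [isFsigma_iff_isGδ_compl]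
  simp only [Set.compl_iUnion]
  exact IsGδ.biInter ht fun i hi => isFsigma_iff_isGδ_compl.1 (h i hi)

lemma IsFsigma.union {X : Type*} [TopologicalSpace X] {s t : Set X} (hs : IsFsigma s)
    (ht : IsFsigma t) : IsFsigma (s ∪ t) := by
  rw [isFsigma_iff_isGδ_compl] at *
  rw [Set.compl_union]
  exact hs.inter ht

lemma isFsigma_open_inter_closed {X : Type*} [MetricSpace X] {s t : Set X} (hs : IsOpen s)
    (ht : IsClosed t) : IsFsigma (s ∩ t) := by
  rw [isFsigma_iff_isGδ_compl, Set.compl_inter]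
  exact hs.isClosed_compl.isGδ.union ht.isOpen_compl.isGδ

/-! ### Player II wins when `f` is of Baire class 1 -/

/-- A function of Baire class 1 admits countable closed covers on whose members it varies by less
than `2 * 2⁻ᵏ`. -/
lemma exists_closed_covers {X Y : Type*} [MetricSpace X] [MetricSpace Y] [Nonempty Y]
    [TopologicalSpace.SeparableSpace Y] {f : X → Y} (hf : BaireClassOne f) :
    ∃ (C : ℕ → ℕ → Set X) (c : ℕ → ℕ → Y), (∀ k i, IsClosed (C k i)) ∧
      (∀ k x, ∃ i, x ∈ C k i) ∧ ∀ k i, ∀ x ∈ C k i, dist (f x) (c k i) < (1 / 2 : ℝ) ^ k := by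
  let q := TopologicalSpace.denseSeq Y
  choose D hD hDe using fun k i : ℕ => hf (Metric.ball (q i) ((1 / 2 : ℝ) ^ k)) Metric.isOpen_ball
  refine ⟨fun k i => D k i.unpair.1 i.unpair.2, fun k i => q i.unpair.1,
    fun k i => hD _ _ _, fun k x => ?_, fun k i x hx => ?_⟩
  · obtain ⟨i, hi⟩ := (TopologicalSpace.denseRange_denseSeq Y).exists_dist_lt (f x)
      (show (0 : ℝ) < (1 / 2) ^ k by positivity)
    have : x ∈ f ⁻¹' Metric.ball (q i) ((1 / 2 : ℝ) ^ k) := hi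
    rw [hDe, Set.mem_iUnion] at this
    obtain ⟨m, hm⟩ := this
    exact ⟨Nat.pair i m, by simpa using hm⟩
  · have : x ∈ f ⁻¹' Metric.ball (q i.unpair.1) ((1 / 2 : ℝ) ^ k) := by
      rw [hDe]
      exact Set.mem_iUnion.2 ⟨_, hx⟩
    exact this

/-- The least index found by inspecting shrinking balls around `x` stabilizes, because each of the
finitely many closed sets with smaller index has positive distance to `x`. -/
lemma eventually_sInf_eq {X : Type*} [MetricSpace X] {C : ℕ → Set X} (hC : ∀ i, IsClosed (C i))
    {x : X} (hx : ∃ i, x ∈ C i) {xs : ℕ → X}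
    (hxs : ∀ n, dist (xs n) x ≤ 2 * (1 / 2 : ℝ) ^ n) :
    ∀ᶠ n in atTop, x ∈ C (sInf {i | (Metric.closedBall (xs n) (2 * (1 / 2 : ℝ) ^ n)
      ∩ C i).Nonempty}) := by
  classical
  have hlt : ∀ i < Nat.find hx, ∀ᶠ n in atTop,
      ¬ (Metric.closedBall (xs n) (2 * (1 / 2 : ℝ) ^ n) ∩ C i).Nonempty := by
    intro i hi
    obtain ⟨r, hr, hsub⟩ := Metric.isOpen_iff.1 (hC i).isOpen_compl x (Nat.find_min hx hi)
    have h0 : Tendsto (fun n : ℕ => 4 * (1 / 2 : ℝ) ^ n) atTop (𝓝 0) := by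
      simpa using (tendsto_pow_atTop_nhds_zero_of_lt_one (r := (1 / 2 : ℝ))
        (by norm_num) (by norm_num)).const_mul 4
    filter_upwards [h0.eventually_lt_const hr] with n hn
    rintro ⟨z, hz, hzC⟩
    refine hsub ?_ hzC
    rw [Metric.mem_closedBall] at hz
    rw [Metric.mem_ball]
    linarith [dist_triangle z (xs n) x, hxs n]
  have hall := (Filter.eventually_all_finite (Set.finite_lt_nat (Nat.find hx))).2 hlt
  filter_upwards [hall] with n hn
  have hmem : Nat.find hx ∈ {i | (Metric.closedBall (xs n) (2 * (1 / 2 : ℝ) ^ n)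
      ∩ C i).Nonempty} :=
    ⟨x, by rw [Metric.mem_closedBall, dist_comm]; exact hxs n, Nat.find_spec hx⟩
  have hle := Nat.sInf_le hmem
  have hge : ¬ sInf {i | (Metric.closedBall (xs n) (2 * (1 / 2 : ℝ) ^ n)
      ∩ C i).Nonempty} < Nat.find hx := fun h => hn _ h (Nat.sInf_mem ⟨_, hmem⟩)
  rw [le_antisymm hle (not_lt.1 hge)]
  exact Nat.find_spec hx

lemma playerII_wins {X Y : Type*} [MetricSpace X] [CompleteSpace X] [MetricSpace Y]
    [TopologicalSpace.SeparableSpace Y] {f : X → Y} (hf : BaireClassOne f) :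
    PlayerIIHasWinningStrategy f := by
  classical
  rcases isEmpty_or_nonempty X with hX | ⟨⟨x₀⟩⟩
  · exact ⟨fun n v => isEmptyElim (v 0), fun xs => isEmptyElim (xs 0)⟩
  have : Nonempty Y := ⟨f x₀⟩
  obtain ⟨C, c, hC, hcov, hc⟩ := exists_closed_covers hf
  -- `g n p j` is the index guessed at level `j` in position `p` at stage `n`.
  let g : ℕ → X → ℕ → ℕ := fun n p j =>
    sInf {i | (Metric.closedBall p (2 * (1 / 2 : ℝ) ^ n) ∩ C j i).Nonempty}
  let Q : ℕ → X → ℕ → Y → Prop := fun n p k y =>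
    ∀ j ≤ k, dist y (c j (g n p j)) < (1 / 2 : ℝ) ^ j
  let τ : ℕ → X → Y := fun n p =>
    Classical.epsilon (Q n p (Nat.findGreatest (fun k => ∃ y, Q n p k y) n))
  refine ⟨fun n v => τ n (v (Fin.last n)), fun xs hxs => ?_⟩
  have hxs' : ∀ n, dist (xs n) (xs (n + 1)) ≤ 1 * (1 / 2 : ℝ) ^ n := by simpa using hxs
  obtain ⟨x, hx⟩ := cauchySeq_tendsto_of_complete
    (cauchySeq_of_le_geometric (1 / 2 : ℝ) 1 (by norm_num) hxs')
  have hd : ∀ n, dist (xs n) x ≤ 2 * (1 / 2 : ℝ) ^ n := fun n => by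
    have := dist_le_of_le_geometric_of_tendsto (1 / 2 : ℝ) 1 (by norm_num) hxs' hx n
    exact this.trans (le_of_eq (by ring))
  refine ⟨x, hx, ?_⟩
  rw [Metric.tendsto_atTop']
  intro ε hε
  obtain ⟨K, hK⟩ := exists_pow_lt_of_lt_one (half_pos hε) (show (1 / 2 : ℝ) < 1 by norm_num)
  have hev : ∀ᶠ n in atTop, ∀ j ∈ {j | j ≤ K}, x ∈ C j (g n (xs n) j) :=
    (Filter.eventually_all_finite (Set.finite_le_nat K)).2
      fun j _ => eventually_sInf_eq (hC j) (hcov j x) hd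
  obtain ⟨N, hN⟩ := eventually_atTop.1 (hev.and (eventually_ge_atTop K))
  refine ⟨N, fun n hn => ?_⟩
  obtain ⟨h1, h2⟩ := hN n hn.le
  have hQ : Q n (xs n) K (f x) := fun j hj => hc _ _ _ (h1 j hj)
  have hspec : ∃ y, Q n (xs n) (Nat.findGreatest (fun k => ∃ y, Q n (xs n) k y) n) y :=
    Nat.findGreatest_spec (P := fun k => ∃ y, Q n (xs n) k y) h2 ⟨_, hQ⟩
  have hle : K ≤ Nat.findGreatest (fun k => ∃ y, Q n (xs n) k y) n :=
    Nat.le_findGreatest h2 ⟨_, hQ⟩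
  have hτ : dist (τ n (xs n)) (c K (g n (xs n) K)) < (1 / 2 : ℝ) ^ K :=
    Classical.epsilon_spec hspec K hle
  have h3 := hQ K le_rfl
  have h4 := dist_triangle_right (τ n (xs n)) (f x) (c K (g n (xs n) K))
  change dist (τ n (xs n)) (f x) < ε
  linarith

/-! ### Player I wins when `f` is not of Baire class 1 -/

/-- If no Fσ set contains `A` and misses `B`, then `A ∩ P` and `B ∩ P` are both dense in some
nonempty set `P`. The set used, which is closed, is the complement of the largest open set inside which `A` can be separated
from `B`. -/
lemma exists_kernel {X : Type*} [MetricSpace X] [TopologicalSpace.SeparableSpace X] {A B : Set X}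
    (h : ¬ ∃ S, IsFsigma S ∧ A ⊆ S ∧ Disjoint S B) :
    ∃ P : Set X, P.Nonempty ∧ ∀ V, IsOpen V → (V ∩ P).Nonempty →
      (V ∩ P ∩ A).Nonempty ∧ (V ∩ P ∩ B).Nonempty := by
  have := UniformSpace.secondCountable_of_separable X
  let 𝒲 : Set (Set X) := {W | IsOpen W ∧ ∃ S, IsFsigma S ∧ A ∩ W ⊆ S ∧ Disjoint S B}
  obtain ⟨T, hTc, hT𝒲, hTU⟩ := TopologicalSpace.isOpen_sUnion_countable 𝒲 fun W hW => hW.1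
  have hW : ⋃₀ 𝒲 ∈ 𝒲 := by
    refine ⟨isOpen_sUnion fun W hW => hW.1, ?_⟩
    choose! S hS hAS hSB using fun W (hW : W ∈ T) => (hT𝒲 hW).2
    refine ⟨⋃ W ∈ T, S W, isFsigma_biUnion hTc hS, ?_, ?_⟩
    · rintro x ⟨hxA, hx⟩
      rw [← hTU] at hx
      obtain ⟨W, hWT, hxW⟩ := hx
      exact Set.mem_biUnion hWT (hAS W hWT ⟨hxA, hxW⟩)
    · simp only [Set.disjoint_iUnion_left]
      exact hSB
  have hP : IsClosed (⋃₀ 𝒲)ᶜ := hW.1.isClosed_compl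
  obtain ⟨S, hS, hAS, hSB⟩ := hW.2
  refine ⟨(⋃₀ 𝒲)ᶜ, ?_, fun V hV hVP => ?_⟩
  · rw [Set.nonempty_compl]
    intro hu
    rw [hu, Set.inter_univ] at hAS
    exact h ⟨S, hS, hAS, hSB⟩
  · have key : V ∪ ⋃₀ 𝒲 ∉ 𝒲 := by
      intro hmem
      obtain ⟨x, hxV, hxP⟩ := hVP
      exact hxP ⟨_, hmem, Or.inl hxV⟩
    constructor
    · by_contra hA
      refine key ⟨hV.union hW.1, S, hS, ?_, hSB⟩
      rintro x ⟨hxA, hx⟩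
      by_cases hxW : x ∈ ⋃₀ 𝒲
      · exact hAS ⟨hxA, hxW⟩
      · exact (hA ⟨x, ⟨hx.resolve_right hxW, hxW⟩, hxA⟩).elim
    · by_contra hB
      refine key ⟨hV.union hW.1, S ∪ (V ∩ (⋃₀ 𝒲)ᶜ),
        hS.union (isFsigma_open_inter_closed hV hP), ?_, ?_⟩
      · rintro x ⟨hxA, hx⟩
        by_cases hxW : x ∈ ⋃₀ 𝒲
        · exact Or.inl (hAS ⟨hxA, hxW⟩)
        · exact Or.inr ⟨hx.resolve_right hxW, hxW⟩
      · rw [Set.disjoint_union_left]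
        refine ⟨hSB, Set.disjoint_left.2 fun x hx hxB => hB ⟨x, hx, hxB⟩⟩

/-- A function that is not of Baire class 1 has inseparable level sets `{ε ≤ φ ∘ f}` and
`{φ ∘ f ≤ 0}` for some continuous `φ`. -/
lemma exists_inseparable {X Y : Type*} [MetricSpace X] [MetricSpace Y] {f : X → Y}
    (hf : ¬ BaireClassOne f) : ∃ (φ : Y → ℝ) (ε : ℝ), Continuous φ ∧ 0 < ε ∧
      ¬ ∃ S, IsFsigma S ∧ {x | ε ≤ φ (f x)} ⊆ S ∧ Disjoint S {x | φ (f x) ≤ 0} := by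
  by_contra! hcon
  refine hf fun U hU => ?_
  rcases Set.eq_empty_or_nonempty Uᶜ with hUc | hUc
  · rw [Set.compl_empty_iff.1 hUc]
    exact isClosed_univ.isFsigma
  have hpos : ∀ y, y ∈ U ↔ 0 < Metric.infDist y Uᶜ := fun y => by
    have := hU.isClosed_compl.notMem_iff_infDist_pos hUc (x := y)
    simpa using this
  choose S hS hAS hSB using fun m : ℕ => hcon (fun y => Metric.infDist y Uᶜ) (1 / ((m : ℝ) + 1))
    (Metric.continuous_infDist_pt _) (by positivity)
  have : f ⁻¹' U = ⋃ m ∈ (Set.univ : Set ℕ), S m := by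
    ext x
    simp only [Set.mem_univ, Set.iUnion_true, Set.mem_iUnion, Set.mem_preimage]
    constructor
    · intro hx
      obtain ⟨m, hm⟩ := exists_nat_one_div_lt ((hpos _).1 hx)
      exact ⟨m, hAS m hm.le⟩
    · rintro ⟨m, hm⟩
      rw [hpos]
      exact not_le.1 fun hle => Set.disjoint_left.1 (hSB m) hm hle
  rw [this]
  exact isFsigma_biUnion Set.countable_univ fun m _ => hS m

/-- The strategy for Player I that starts at `x₀` and moves from `x` at stage `n` to
`step n x y` when Player II has just played `y`. -/
def stepStrategy {X Y : Type*} (x₀ : X) (step : ℕ → X → Y → X) : (n : ℕ) → (Fin n → Y) → X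
  | 0, _ => x₀
  | n + 1, v => step n (stepStrategy x₀ step n (Fin.init v)) (v (Fin.last n))

/-- A sequence that is constant from `N` on equals its limit there. -/
lemma eq_limit_of_stationary {X : Type*} [MetricSpace X] {xs : ℕ → X} {x : X} {N : ℕ}
    (hx : Tendsto xs atTop (𝓝 x)) (h : ∀ n ≥ N, xs (n + 1) = xs n) : xs N = x := by
  have hc : ∀ n ≥ N, xs n = xs N := fun n hn =>
    Nat.le_induction rfl (fun m hm ih => (h m hm).trans ih) n hn
  refine tendsto_nhds_unique ?_ hx
  exact tendsto_const_nhds.congr' (eventually_atTop.2 ⟨N, fun n hn => (hc n hn).symm⟩)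

lemma playerI_wins {X Y : Type*} [MetricSpace X] [CompleteSpace X]
    [TopologicalSpace.SeparableSpace X] [MetricSpace Y] {f : X → Y} (hf : ¬ BaireClassOne f) :
    PlayerIHasWinningStrategy f := by
  classical
  obtain ⟨φ, ε, hφ, hε, hsep⟩ := exists_inseparable hf
  obtain ⟨P, ⟨p, hp⟩, hP⟩ := exists_kernel hsep
  have hnear : ∀ (n : ℕ) (x : X), ∃ a b : X, x ∈ P →
      (a ∈ P ∧ ε ≤ φ (f a) ∧ dist x a ≤ (1 / 2 : ℝ) ^ n) ∧
      (b ∈ P ∧ φ (f b) ≤ 0 ∧ dist x b ≤ (1 / 2 : ℝ) ^ n) := by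
    intro n x
    by_cases hx : x ∈ P
    · obtain ⟨⟨a, ⟨ha, haP⟩, haA⟩, ⟨b, ⟨hb, hbP⟩, hbB⟩⟩ :=
        hP (Metric.ball x ((1 / 2 : ℝ) ^ n)) Metric.isOpen_ball
          ⟨x, Metric.mem_ball_self (by positivity), hx⟩
      exact ⟨a, b, fun _ => ⟨⟨haP, haA, (Metric.mem_ball'.1 ha).le⟩,
        ⟨hbP, hbB, (Metric.mem_ball'.1 hb).le⟩⟩⟩
    · exact ⟨x, x, fun h => (hx h).elim⟩
  choose a b hab using hnear
  let step : ℕ → X → Y → X := fun n x y =>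
    if ε ≤ φ (f x) then (if 2 * ε / 3 < φ y then b n x else x)
    else (if φ y < ε / 3 then a n x else x)
  refine ⟨stepStrategy (a 0 p) step, fun ys => ?_⟩
  set xs : ℕ → X := fun n => stepStrategy (a 0 p) step n (fun i : Fin n => ys i) with hxs
  have hsucc : ∀ n, xs (n + 1) = step n (xs n) (ys n) := fun n => rfl
  have hinv : ∀ n, xs n ∈ P ∧ (ε ≤ φ (f (xs n)) ∨ φ (f (xs n)) ≤ 0) := by
    intro n
    induction n with
    | zero => exact ⟨(hab 0 p hp).1.1, Or.inl (hab 0 p hp).1.2.1⟩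
    | succ n ih =>
      have h := hab n (xs n) ih.1
      rw [hsucc]
      dsimp only [step]
      split_ifs
      · exact ⟨h.2.1, Or.inr h.2.2.1⟩
      · exact ih
      · exact ⟨h.1.1, Or.inl h.1.2.1⟩
      · exact ih
  have hdist : ∀ n, dist (xs n) (xs (n + 1)) ≤ (1 / 2 : ℝ) ^ n := by
    intro n
    have h := hab n (xs n) (hinv n).1
    rw [hsucc]
    dsimp only [step]
    split_ifs
    · exact h.2.2.2
    · simp
    · exact h.1.2.2
    · simp
  refine ⟨hdist, ?_⟩
  obtain ⟨x, hx⟩ := cauchySeq_tendsto_of_complete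
    (cauchySeq_of_le_geometric (1 / 2 : ℝ) 1 (by norm_num) (by simpa using hdist))
  refine ⟨x, hx, fun hy => ?_⟩
  have hφy : Tendsto (fun n => φ (ys n)) atTop (𝓝 (φ (f x))) := (hφ.tendsto _).comp hy
  have hA : ∀ n, ε ≤ φ (f (xs n)) → φ (ys n) ≤ 2 * ε / 3 → xs (n + 1) = xs n := by
    intro n h1 h2
    rw [hsucc]
    simp only [step, if_pos h1, if_neg (not_lt.2 h2)]
  have hB : ∀ n, ¬ ε ≤ φ (f (xs n)) → ε / 3 ≤ φ (ys n) → xs (n + 1) = xs n := by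
    intro n h1 h2
    rw [hsucc]
    simp only [step, if_neg h1, if_neg (not_lt.2 h2)]
  have hAB : ∀ n, ε ≤ φ (f (xs n)) → 2 * ε / 3 < φ (ys n) → ¬ ε ≤ φ (f (xs (n + 1))) := by
    intro n h1 h2
    rw [hsucc]
    simp only [step, if_pos h1, if_pos h2]
    have := (hab n (xs n) (hinv n).1).2.2.1
    linarith
  have hBA : ∀ n, ¬ ε ≤ φ (f (xs n)) → φ (ys n) < ε / 3 → ε ≤ φ (f (xs (n + 1))) := by
    intro n h1 h2
    rw [hsucc]
    simp only [step, if_neg h1, if_pos h2]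
    exact (hab n (xs n) (hinv n).1).1.2.1
  -- The two thresholds differ, so `φ (ys n)` eventually stays on one side of one of them, and
  -- Player I can then jump at most once more.
  rcases lt_or_ge (φ (f x)) (2 * ε / 3) with hlt | hge
  · obtain ⟨N, hN⟩ := eventually_atTop.1 (hφy.eventually_lt_const hlt)
    by_cases hex : ∃ M ≥ N, ε ≤ φ (f (xs M))
    · obtain ⟨M, hM, hMA⟩ := hex
      have hall : ∀ n ≥ M, ε ≤ φ (f (xs n)) := fun n hn =>
        Nat.le_induction hMA (fun m hm ih => by rw [hA m ih (hN m (hM.trans hm)).le]; exact ih) n hn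
      have := eq_limit_of_stationary hx fun n hn => hA n (hall n hn) (hN n (hM.trans hn)).le
      rw [this] at hMA
      linarith
    · push Not at hex
      have hbig : ∀ n ≥ N, ε / 3 ≤ φ (ys n) := fun n hn => by
        by_contra! hc
        exact absurd (hBA n (not_le.2 (hex n hn)) hc) (not_le.2 (hex (n + 1) (by omega)))
      have := eq_limit_of_stationary hx fun n hn => hB n (not_le.2 (hex n hn)) (hbig n hn)
      have h0 := (hinv N).2.resolve_left (not_le.2 (hex N le_rfl))
      have h1 := ge_of_tendsto hφy (eventually_atTop.2 ⟨N, hbig⟩)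
      rw [this] at h0
      linarith
  · obtain ⟨N, hN⟩ := eventually_atTop.1
      (hφy.eventually_const_lt (show ε / 3 < φ (f x) by linarith))
    by_cases hex : ∃ M ≥ N, ¬ ε ≤ φ (f (xs M))
    · obtain ⟨M, hM, hMB⟩ := hex
      have hall : ∀ n ≥ M, ¬ ε ≤ φ (f (xs n)) := fun n hn =>
        Nat.le_induction hMB (fun m hm ih => by rw [hB m ih (hN m (hM.trans hm)).le]; exact ih) n hn
      have := eq_limit_of_stationary hx fun n hn => hB n (hall n hn) (hN n (hM.trans hn)).le
      have h0 := (hinv M).2.resolve_left hMB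
      rw [this] at h0
      linarith
    · push Not at hex
      have hsmall : ∀ n ≥ N, φ (ys n) ≤ 2 * ε / 3 := fun n hn => by
        by_contra! hc
        exact hAB n (hex n hn) hc (hex (n + 1) (by omega))
      have := eq_limit_of_stationary hx fun n hn => hA n (hex n hn) (hsmall n hn)
      have h0 := hex N le_rfl
      have h1 := le_of_tendsto hφy (eventually_atTop.2 ⟨N, hsmall⟩)
      rw [this] at h0
      linarith

/-- For `f : X → Y` between Polish spaces (`X` equipped with a compatible complete metric),
Player II has a winning strategy in `G_f` iff `f` is of Baire class 1; moreover `G_f` is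
determined: exactly one of the two players has a winning strategy. -/
theorem game_characterization_of_baireClassOne
    {X Y : Type*} [MetricSpace X] [CompleteSpace X] [TopologicalSpace.SeparableSpace X]
    [MetricSpace Y] [CompleteSpace Y] [TopologicalSpace.SeparableSpace Y]
    (f : X → Y) :
    (PlayerIIHasWinningStrategy f ↔ BaireClassOne f) ∧
      Xor' (PlayerIIHasWinningStrategy f) (PlayerIHasWinningStrategy f) := by
  refine ⟨⟨fun hII => ?_, playerII_wins⟩, ?_⟩
  · by_contra hf
    exact not_both_win f hII (playerI_wins hf)
  · by_cases hf : BaireClassOne f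
    · exact Or.inl ⟨playerII_wins hf, fun hI => not_both_win f (playerII_wins hf) hI⟩
    · exact Or.inr ⟨playerI_wins hf, fun hII => not_both_win f hII (playerI_wins hf)⟩
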